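/- Let E ⊆ ℝ² be compact, ε > 0, and let x ∈ ∂E_ε with Ξ_ext(x) = {ξ₁, ξ₂} (allowing ξ₁ = ξ₂). Then for every δ > 0 there exists r > 0 such that for all z ∈ B_r(x): z ∈ E_ε if and only if either z ∉ closure(U_r(x, ξ₁)) ∪ closure(U_r(x, ξ₂)), or z lies in the closed ε-neighbourhood of E ∩ B_δ(Π_ext(x)), i.e. z ∈ closure(⋃ {B_ε(y) : y ∈ E with dist(y, Π_ext(x)) < δ}). -/

import Mathlib

open Metric Set Filter Topology RealInnerProductSpace

noncomputable section

/-- The Euclidean plane. -/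
abbrev Plane := EuclideanSpace ℝ (Fin 2)

/-- The closed ε-neighbourhood of a set `E ⊆ ℝ²`: the closure of the union of open
ε-balls centred at points of `E`. -/
def eNbhd (E : Set Plane) (ε : ℝ) : Set Plane :=
  closure (⋃ y ∈ E, ball y ε)

/-- The set of contributors of a boundary point `x ∈ ∂E_ε`: points `y ∈ ∂E` with
`‖y - x‖ = ε`. -/
def contributors (E : Set Plane) (ε : ℝ) (x : Plane) : Set Plane :=
  {y ∈ frontier E | ‖y - x‖ = ε}

/-- The set of outward directions from `E_ε` at `x`. -/
def outwardDirs (E : Set Plane) (ε : ℝ) (x : Plane) : Set Plane :=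
  {ξ | ‖ξ‖ = 1 ∧ ∃ u : ℕ → Plane, (∀ n, u n ∉ eNbhd E ε) ∧
    Tendsto u atTop (nhds x) ∧
    Tendsto (fun n => (‖u n - x‖)⁻¹ • (u n - x)) atTop (nhds ξ)}

/-- The set of extremal outward directions at `x`: outward directions perpendicular to
`y - x` for some contributor `y`. -/
def extOutward (E : Set Plane) (ε : ℝ) (x : Plane) : Set Plane :=
  {ξ ∈ outwardDirs E ε x | ∃ y ∈ contributors E ε x, ⟪y - x, ξ⟫ = 0}

/-- The set of extremal contributors at `x`: contributors perpendicular to some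
outward direction. -/
def extContrib (E : Set Plane) (ε : ℝ) (x : Plane) : Set Plane :=
  {y ∈ contributors E ε x | ∃ ξ ∈ outwardDirs E ε x, ⟪y - x, ξ⟫ = 0}

/-- The set of extremal pairs at `x`. -/
def extPairs (E : Set Plane) (ε : ℝ) (x : Plane) : Set (Plane × Plane) :=
  {p | p.1 ∈ outwardDirs E ε x ∧ p.2 ∈ contributors E ε x ∧ ⟪p.2 - x, p.1⟫ = 0}

/-- The set `Unp(E)` of boundary points of `E_ε` with a unique contributor. -/
def unp (E : Set Plane) (ε : ℝ) : Set Plane :=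
  {x ∈ frontier (eNbhd E ε) | ∃ y, contributors E ε x = {y}}

/-- A boundary point `x ∈ ∂E_ε` is smooth if `x ∈ Unp(E)` and a whole neighbourhood of
`x` on the boundary consists of points of `Unp(E)`. -/
def IsSmoothPt (E : Set Plane) (ε : ℝ) (x : Plane) : Prop :=
  x ∈ unp E ε ∧ ∃ r > 0, frontier (eNbhd E ε) ∩ ball x r ⊆ unp E ε

/-- A singularity: a non-smooth boundary point of `E_ε`. -/
def IsSingularity (E : Set Plane) (ε : ℝ) (x : Plane) : Prop :=
  x ∈ frontier (eNbhd E ε) ∧ ¬ IsSmoothPt E ε x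

/-- The open half-ball of radius `r` at `x` in direction `v`. -/
def halfBall (x v : Plane) (r : ℝ) : Set Plane :=
  {z ∈ ball x r | 0 < ⟪z - x, v⟫}

/-- `V` is a connected component of the complement of `E_ε`. -/
def IsCompOfCompl (E : Set Plane) (ε : ℝ) (V : Set Plane) : Prop :=
  ∃ z, z ∉ eNbhd E ε ∧ V = connectedComponentIn (eNbhd E ε)ᶜ z

/-- The closed geodesic arc-segment between `v, w ∈ S¹`. -/
def arcSeg (v w : Plane) : Set Plane :=
  {u | ‖u‖ = 1 ∧ ∃ a b : ℝ, 0 ≤ a ∧ 0 ≤ b ∧ u = a • v + b • w}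

/-- The open geodesic arc-segment between `v, w ∈ S¹`. -/
def openArc (v w : Plane) : Set Plane :=
  arcSeg v w \ {v, w}

/-- A chain sequence for `x`: a sequence of singularities converging to `x` whose
extremal contributors become increasingly opposed. -/
def IsChainSeq (E : Set Plane) (ε : ℝ) (x : Plane) (u : ℕ → Plane) : Prop :=
  (∀ n, IsSingularity E ε (u n)) ∧ (∀ n, u n ≠ x) ∧ Tendsto u atTop (nhds x) ∧
  ∃ y1 y2 : ℕ → Plane, (∀ n, extContrib E ε (u n) = {y1 n, y2 n}) ∧
    Tendsto (fun n => ⟪ε⁻¹ • (y1 n - u n), ε⁻¹ • (y2 n - u n)⟫) atTop (nhds (-1))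

/-- Type S1: wedge. -/
def IsWedge (E : Set Plane) (ε : ℝ) (x : Plane) : Prop :=
  IsSingularity E ε x ∧
  ∃ ξ₁ ξ₂, extOutward E ε x = {ξ₁, ξ₂} ∧ ξ₁ ≠ ξ₂ ∧ ξ₁ ≠ -ξ₂

/-- Type S2: one-sided sharp singularity. -/
def IsSharp (E : Set Plane) (ε : ℝ) (x : Plane) : Prop :=
  IsSingularity E ε x ∧ (∃ ξ, extOutward E ε x = {ξ}) ∧
  ∃ δ > 0, IsConnected (ball x δ ∩ (eNbhd E ε)ᶜ)

/-- Type S3: sharp-sharp singularity. -/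
def IsSharpSharp (E : Set Plane) (ε : ℝ) (x : Plane) : Prop :=
  IsSingularity E ε x ∧ ∃ ξ, extOutward E ε x = {ξ, -ξ} ∧
    ∀ η ∈ ({ξ, -ξ} : Set Plane), ∃ δ > 0, IsConnected (halfBall x η δ ∩ (eNbhd E ε)ᶜ)

/-- Type S4: one-sided shallow singularity. -/
def IsShallow (E : Set Plane) (ε : ℝ) (x : Plane) : Prop :=
  IsSingularity E ε x ∧ x ∈ unp E ε ∧
  ∃ ξ₁ ξ₂, extOutward E ε x = {ξ₁, ξ₂} ∧
    (∃ δ > 0, halfBall x ξ₁ δ ∩ frontier (eNbhd E ε) ⊆ unp E ε) ∧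
    (∀ δ > 0, ¬ (halfBall x ξ₂ δ ∩ frontier (eNbhd E ε) ⊆ unp E ε))

/-- Type S5: shallow-shallow singularity. -/
def IsShallowShallow (E : Set Plane) (ε : ℝ) (x : Plane) : Prop :=
  IsSingularity E ε x ∧ x ∈ unp E ε ∧
  ∃ ξ₁ ξ₂, extOutward E ε x = {ξ₁, ξ₂} ∧
    ∀ η ∈ ({ξ₁, ξ₂} : Set Plane), ∀ δ > 0,
      ¬ (halfBall x η δ ∩ frontier (eNbhd E ε) ⊆ unp E ε)

/-- Type S6: one-sided chain singularity. -/
def IsChainSing (E : Set Plane) (ε : ℝ) (x : Plane) : Prop :=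
  IsSingularity E ε x ∧ (∃ ξ, extOutward E ε x = {ξ}) ∧
  ∃ u, IsChainSeq E ε x u

/-- Type S7: chain-chain singularity. -/
def IsChainChain (E : Set Plane) (ε : ℝ) (x : Plane) : Prop :=
  IsSingularity E ε x ∧ ∃ ξ, extOutward E ε x = {ξ, -ξ} ∧
    ∀ η ∈ ({ξ, -ξ} : Set Plane), ∃ δ > 0, ∃ u,
      IsChainSeq E ε x u ∧ ∀ n, u n ∈ halfBall x η δ

/-- Type S8: sharp-chain singularity. -/
def IsSharpChain (E : Set Plane) (ε : ℝ) (x : Plane) : Prop :=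
  IsSingularity E ε x ∧ ∃ ξ, extOutward E ε x = {ξ, -ξ} ∧
    (∃ δ > 0, IsConnected (halfBall x ξ δ ∩ (eNbhd E ε)ᶜ)) ∧
    (∃ δ > 0, ∃ u, IsChainSeq E ε x u ∧ ∀ n, u n ∈ halfBall x (-ξ) δ)

/-! Whether points `z → x` with `(z - x) / ‖z - x‖ → ζ` lie in `E_ε` is governed by the signs of
`⟪y - x, ζ⟫` over the contributors `y`: one positive value forces `z ∈ E_ε`, while all values
negative forces `z ∉ E_ε`. By compactness of the circle it suffices to argue for one direction `ζ`
at a time. If the vectors `y - x` lie in an open half-plane, the outer unit normal to an edge of the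
cone they span is a limit of directions with all values negative, hence an extremal outward
direction. Consequently an outward direction cannot make a nonpositive inner product with every
extremal one unless two of these are opposite. On the other hand, let `ζ` make a nonnegative inner
product with an extremal direction `ξ`, and suppose no extremal contributor is positive on `ζ`. The
edge of the cone away from the line orthogonal to `ξ` is spanned by an extremal contributor; a
non-extremal one that is nonnegative on `ζ` would lie on or beyond this edge, hence be parallel to
it and extremal. So only the part of `E` close to the extremal contributors matters along `ζ`.
-/

open NormedSpace (normalize)

section NormedSpace

variable {V : Type*} [NormedAddCommGroup V] [NormedSpace ℝ V]

/-- The filter of points approaching `x` from the direction `ξ`: those `z → x` for which the unit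
vectors `(z - x) / ‖z - x‖` tend to `ξ`. A unit vector `ξ` is an outward direction at `x` exactly
when the complement of `E_ε` is frequent along this filter. -/
def nhdsAlong (x ξ : V) : Filter V :=
  𝓝 x ⊓ comap (fun z => normalize (z - x)) (𝓝 ξ)

instance (x ξ : V) : (nhdsAlong x ξ).IsCountablyGenerated :=
  inferInstanceAs (IsCountablyGenerated (_ ⊓ _))

theorem nhdsAlong_le_nhds (x ξ : V) : nhdsAlong x ξ ≤ 𝓝 x :=
  inf_le_left

theorem tendsto_normalize_nhdsAlong (x ξ : V) :
    Tendsto (fun z => normalize (z - x)) (nhdsAlong x ξ) (𝓝 ξ) :=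
  tendsto_comap.mono_left inf_le_right

theorem tendsto_nhdsAlong_iff {ι : Type*} {l : Filter ι} {u : ι → V} {x ξ : V} :
    Tendsto u l (nhdsAlong x ξ) ↔
      Tendsto u l (𝓝 x) ∧ Tendsto (fun i => normalize (u i - x)) l (𝓝 ξ) := by
  rw [nhdsAlong, tendsto_inf, tendsto_comap_iff]
  rfl

theorem nhdsAlong_neBot (x : V) {ξ : V} (hξ : ‖ξ‖ = 1) : (nhdsAlong x ξ).NeBot := by
  have hray : Tendsto (fun t : ℝ => x + t • ξ) (𝓝[>] 0) (nhdsAlong x ξ) := by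
    refine tendsto_nhdsAlong_iff.2 ⟨?_, tendsto_const_nhds.congr' ?_⟩
    · exact (Continuous.tendsto' (by fun_prop) 0 x (by simp)).mono_left nhdsWithin_le_nhds
    · filter_upwards [self_mem_nhdsWithin] with t ht
      rw [add_sub_cancel_left, NormedSpace.normalize_smul_of_pos ht,
        NormedSpace.normalize_eq_self_of_norm_eq_one hξ]
  exact hray.neBot

theorem eventually_eventually_nhdsAlong {p : V → Prop} {x ξ : V}
    (h : ∀ᶠ z in nhdsAlong x ξ, p z) : ∀ᶠ η in 𝓝 ξ, ∀ᶠ z in nhdsAlong x η, p z := by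
  obtain ⟨s, hs, t, ⟨n, hn, hnt⟩, hst⟩ := mem_inf_iff.1 h
  filter_upwards [eventually_mem_nhds_iff.2 hn] with η hη
  filter_upwards [nhdsAlong_le_nhds x η hs, tendsto_normalize_nhdsAlong x η hη] with z hzs hzn
  exact (hst.symm ▸ ⟨hzs, hnt hzn⟩ : z ∈ {z | p z})

theorem eventually_nhds_of_forall_nhdsAlong [ProperSpace V] {p : V → Prop} {x : V} (hx : p x)
    (h : ∀ ξ : V, ‖ξ‖ = 1 → ∀ᶠ z in nhdsAlong x ξ, p z) : ∀ᶠ z in 𝓝 x, p z := by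
  by_contra hp
  obtain ⟨u, hux, hu⟩ := exists_seq_forall_of_frequently (not_eventually.1 hp)
  have hsphere : ∀ n, normalize (u n - x) ∈ sphere (0 : V) 1 := fun n =>
    mem_sphere_zero_iff_norm.2 <| NormedSpace.norm_normalize <|
      sub_ne_zero.2 fun hun => hu n (hun ▸ hx)
  obtain ⟨ξ, hξ, φ, hφ, hdir⟩ := (isCompact_sphere (0 : V) 1).tendsto_subseq hsphere
  have hu_along : Tendsto (u ∘ φ) atTop (nhdsAlong x ξ) :=
    tendsto_nhdsAlong_iff.2 ⟨hux.comp hφ.tendsto_atTop, hdir⟩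
  obtain ⟨n, hn⟩ := (hu_along.eventually (h ξ (mem_sphere_zero_iff_norm.1 hξ))).exists
  exact hu _ hn

end NormedSpace

section InnerProductSpace

variable {V : Type*} [NormedAddCommGroup V] [InnerProductSpace ℝ V]

theorem inner_eq_norm_mul_inner_normalize (v w : V) : ⟪v, w⟫ = ‖w‖ * ⟪v, normalize w⟫ := by
  rw [← real_inner_smul_right, NormedSpace.norm_smul_normalize]

theorem eventually_inner_pos_nhdsAlong {x ξ v : V} (h : 0 < ⟪v, ξ⟫) :
    ∀ᶠ z in nhdsAlong x ξ, 0 < ⟪v, z - x⟫ := by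
  have hdir := tendsto_const_nhds.inner (tendsto_normalize_nhdsAlong x ξ) (𝕜 := ℝ) (f := fun _ => v)
  filter_upwards [hdir.eventually_const_lt h] with z hz
  rw [inner_eq_norm_mul_inner_normalize]
  refine mul_pos (norm_pos_iff.2 ?_) hz
  intro hzero
  simp [hzero] at hz

theorem eventually_dist_le_nhdsAlong {x ξ w : V} (h : 0 < ⟪w - x, ξ⟫) :
    ∀ᶠ z in nhdsAlong x ξ, dist z w ≤ dist x w := by
  have hdir := (tendsto_const_nhds.inner (tendsto_normalize_nhdsAlong x ξ) (𝕜 := ℝ)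
    (f := fun _ => w - x)).const_mul 2
  have hnorm : Tendsto (fun z => ‖z - x‖) (nhdsAlong x ξ) (𝓝 0) :=
    (Continuous.tendsto' (by fun_prop) x 0 (by simp)).mono_left (nhdsAlong_le_nhds x ξ)
  filter_upwards [hnorm.eventually_lt hdir (by linarith)] with z hz
  have hexpand : dist z w ^ 2 =
      dist x w ^ 2 - ‖z - x‖ * (2 * ⟪w - x, normalize (z - x)⟫ - ‖z - x‖) := by
    rw [dist_comm z, dist_comm x, dist_eq_norm, dist_eq_norm, ← sub_sub_sub_cancel_right w z x,
      norm_sub_sq_real, inner_eq_norm_mul_inner_normalize (w - x) (z - x)]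
    ring
  refine (sq_le_sq₀ dist_nonneg dist_nonneg).1 ?_
  rw [hexpand]
  exact sub_le_self _ (mul_nonneg (norm_nonneg _) (by linarith))

theorem inner_sub_nonneg_of_dist_le {x y z : V} (h : dist z y ≤ dist x y) :
    0 ≤ ⟪y - x, z - x⟫ := by
  have hsq := pow_le_pow_left₀ dist_nonneg h 2
  rw [dist_comm z, dist_comm x, dist_eq_norm, dist_eq_norm, ← sub_sub_sub_cancel_right y z x,
    norm_sub_sq_real] at hsq
  linarith [sq_nonneg ‖z - x‖]

theorem inner_normalize_sub_nonneg_of_dist_le {x y z : V} (h : dist z y ≤ dist x y) :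
    0 ≤ ⟪y - x, normalize (z - x)⟫ := by
  rw [NormedSpace.normalize, real_inner_smul_right]
  exact mul_nonneg (by positivity) (inner_sub_nonneg_of_dist_le h)

theorem eventually_mem_cthickening_nhdsAlong {x ξ w : V} {A : Set V} (hw : w ∈ closure A)
    (h : 0 < ⟪w - x, ξ⟫) : ∀ᶠ z in nhdsAlong x ξ, z ∈ cthickening (dist x w) A := by
  filter_upwards [eventually_dist_le_nhdsAlong h] with z hz
  rw [← cthickening_closure]
  exact mem_cthickening_of_dist_le z w _ _ hw hz

theorem eventually_notMem_cthickening_nhdsAlong [ProperSpace V] {x ξ : V} {ε : ℝ} {A : Set V}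
    (hε : 0 ≤ ε) (hA : ∀ y ∈ closure A, ε ≤ dist x y)
    (h : ∀ y ∈ closure A, dist x y = ε → ⟪y - x, ξ⟫ < 0) :
    ∀ᶠ z in nhdsAlong x ξ, z ∉ cthickening ε A := by
  by_contra hmem
  simp only [not_eventually, not_not] at hmem
  obtain ⟨u, hu, humem⟩ := exists_seq_forall_of_frequently hmem
  simp only [cthickening_eq_biUnion_closedBall A hε, mem_iUnion₂, mem_closedBall] at humem
  choose y hyA hy using humem
  obtain ⟨hux, hudir⟩ := tendsto_nhdsAlong_iff.1 hu
  have hbounded : ∀ᶠ n in atTop, y n ∈ closedBall x (ε + 1) := by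
    filter_upwards [hux.eventually (closedBall_mem_nhds x one_pos)] with n hn
    exact (dist_triangle_left (y n) x (u n)).trans (add_le_add (hy n) hn)
  obtain ⟨w, -, φ, hφ, hyw⟩ := tendsto_subseq_of_frequently_bounded isBounded_closedBall
    hbounded.frequently
  have hwA : w ∈ closure A := isClosed_closure.mem_of_tendsto hyw (.of_forall fun n => hyA _)
  have hdist : dist x w ≤ ε :=
    le_of_tendsto ((hux.comp hφ.tendsto_atTop).dist hyw) (.of_forall fun n => hy _)
  have hinner : 0 ≤ ⟪w - x, ξ⟫ :=
    ge_of_tendsto ((hyw.sub_const x).inner (hudir.comp hφ.tendsto_atTop)) <| .of_forall fun n =>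
      inner_normalize_sub_nonneg_of_dist_le ((hy _).trans (hA _ (hyA _)))
  exact (h w hwA (hdist.antisymm (hA w hwA))).not_ge hinner

end InnerProductSpace

section OrientedPlane

variable {V : Type*} [NormedAddCommGroup V] [InnerProductSpace ℝ V]
  [Fact (Module.finrank ℝ V = 2)]

theorem exists_orientation_areaForm_pos {ξ p : V} (hξ : ξ ≠ 0) (hp : p ≠ 0) (h : ⟪p, ξ⟫ = 0) :
    ∃ o : Orientation ℝ V (Fin 2), 0 < o.areaForm ξ p := by
  have : FiniteDimensional ℝ V := .of_fact_finrank_eq_two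
  let o : Orientation ℝ V (Fin 2) := (Module.finBasisOfFinrankEq ℝ V Fact.out).orientation
  have habs : 0 < |o.areaForm ξ p| := by
    rw [o.abs_areaForm_of_orthogonal (inner_eq_zero_symm.1 h)]
    positivity
  rcases (abs_pos.1 habs).lt_or_gt with hneg | hpos
  · exact ⟨-o, by simpa [Orientation.areaForm_neg_orientation] using hneg⟩
  · exact ⟨o, hpos⟩

variable (o : Orientation ℝ V (Fin 2)) {ξ ζ : V}

theorem areaForm_nonpos_iff (hξ : ξ ≠ 0) (v w : V) :
    o.areaForm v w ≤ 0 ↔ ⟪v, ξ⟫ * o.areaForm ξ w ≤ o.areaForm ξ v * ⟪w, ξ⟫ := by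
  rw [← sub_nonpos (a := _ * _), real_inner_comm, real_inner_comm ξ, o.inner_mul_areaForm_sub,
    ← smul_eq_mul, smul_nonpos_iff_nonpos_of_pos_left (by positivity)]

theorem areaForm_neg_iff (hξ : ξ ≠ 0) (v w : V) :
    o.areaForm v w < 0 ↔ ⟪v, ξ⟫ * o.areaForm ξ w < o.areaForm ξ v * ⟪w, ξ⟫ := by
  rw [← sub_neg (a := _ * _), real_inner_comm, real_inner_comm ξ, o.inner_mul_areaForm_sub,
    ← smul_eq_mul, smul_neg_iff_of_pos_left (by positivity)]

theorem inner_eq_mul_add_areaForm_mul (hξ : ‖ξ‖ = 1) (v w : V) :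
    ⟪v, w⟫ = ⟪v, ξ⟫ * ⟪w, ξ⟫ + o.areaForm ξ v * o.areaForm ξ w := by
  rw [real_inner_comm ξ v, real_inner_comm ξ w, o.inner_mul_inner_add_areaForm_mul_areaForm, hξ,
    one_pow, one_mul]

theorem inner_normalize_rightAngleRotation_self (v : V) :
    ⟪v, normalize (o.rightAngleRotation v)⟫ = 0 := by
  rw [NormedSpace.normalize, real_inner_smul_right, o.inner_rightAngleRotation_right,
    o.areaForm_apply_self, neg_zero, mul_zero]

section Edges

variable {α : Type*} [TopologicalSpace α] {S : Set α} {f : α → V}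

theorem exists_forall_areaForm_nonpos (hS : IsCompact S) (hne : S.Nonempty)
    (hf : ContinuousOn f S) (hneg : ∀ a ∈ S, ⟪f a, ξ⟫ < 0) :
    ∃ c ∈ S, ∀ a ∈ S, o.areaForm (f c) (f a) ≤ 0 := by
  have hξ : ξ ≠ 0 := by
    rintro rfl
    obtain ⟨a, ha⟩ := hne
    simpa using hneg a ha
  have hcont : ContinuousOn (fun a => o.areaForm ξ (f a) / ⟪f a, ξ⟫) S := by
    simp only [← o.inner_rightAngleRotation_left]
    exact (continuousOn_const.inner hf).div (hf.inner continuousOn_const)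
      fun a ha => (hneg a ha).ne
  -- The maximiser of this slope spans an edge of the cone generated by the vectors `f a`.
  obtain ⟨c, hc, hmax⟩ := hS.exists_isMaxOn hne hcont
  refine ⟨c, hc, fun a ha => (areaForm_nonpos_iff o hξ _ _).2 ?_⟩
  have hle : o.areaForm ξ (f a) / ⟪f a, ξ⟫ ≤ o.areaForm ξ (f c) / ⟪f c, ξ⟫ := hmax ha
  rw [div_le_iff_of_neg (hneg a ha), div_mul_eq_mul_div, div_le_iff_of_neg (hneg c hc)] at hle
  linarith

-- The tilt of `ξ` by the edge normal is what makes that normal a limit of outward directions.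
theorem exists_forall_areaForm_nonpos_of_inner_nonpos (hξ : ξ ≠ 0) (hS : IsCompact S)
    (hf : ContinuousOn f S) (hnonpos : ∀ a ∈ S, ⟪f a, ξ⟫ ≤ 0)
    (hboundary : ∀ a ∈ S, ⟪f a, ξ⟫ = 0 → 0 < o.areaForm ξ (f a))
    (hne : ∃ a ∈ S, o.areaForm ξ (f a) ≤ 0) :
    ∃ c ∈ S, o.areaForm ξ (f c) ≤ 0 ∧ (∀ a ∈ S, o.areaForm (f c) (f a) ≤ 0) ∧
      ∀ a ∈ S, ⟪f a, ξ + o.rightAngleRotation (f c)⟫ < 0 := by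
  have hneg : ∀ a ∈ S, o.areaForm ξ (f a) ≤ 0 → ⟪f a, ξ⟫ < 0 := fun a ha hle =>
    (hnonpos a ha).lt_of_ne fun h => (hboundary a ha h).not_ge hle
  have harea : ContinuousOn (fun a => o.areaForm ξ (f a)) S := by
    simp only [← o.inner_rightAngleRotation_left]
    exact continuousOn_const.inner hf
  obtain ⟨c, ⟨hc, hξc⟩, hcmax⟩ := exists_forall_areaForm_nonpos o
    (harea.lowerSemicontinuousOn.isCompact_inter_preimage_Iic hS 0) hne (hf.mono inter_subset_left)
    fun a ha => hneg a ha.1 ha.2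
  have hlt : ∀ a ∈ S, 0 < o.areaForm ξ (f a) → o.areaForm (f c) (f a) < 0 := fun a ha hpos =>
    (areaForm_neg_iff o hξ _ _).2 <| (mul_neg_of_neg_of_pos (hneg c hc hξc) hpos).trans_le
      (mul_nonneg_of_nonpos_of_nonpos hξc (hnonpos a ha))
  refine ⟨c, hc, hξc, fun a ha => ?_, fun a ha => ?_⟩
  · rcases le_or_gt (o.areaForm ξ (f a)) 0 with hle | hpos
    · exact hcmax a ⟨ha, hle⟩
    · exact (hlt a ha hpos).le
  · rw [inner_add_right, real_inner_comm (o.rightAngleRotation (f c)),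
      o.inner_rightAngleRotation_left]
    rcases le_or_gt (o.areaForm ξ (f a)) 0 with hle | hpos
    · exact add_neg_of_neg_of_nonpos (hneg a ha hle) (hcmax a ⟨ha, hle⟩)
    · exact add_neg_of_nonpos_of_neg (hnonpos a ha) (hlt a ha hpos)

end Edges

theorem areaForm_nonpos_of_quadrant (hξ : ξ ≠ 0) {v : V} (hξζ : 0 ≤ ⟪ζ, ξ⟫)
    (hωζ : o.areaForm ξ ζ ≤ 0) (hξv : ⟪v, ξ⟫ ≤ 0) (hωv : o.areaForm ξ v ≤ 0) :
    o.areaForm ζ v ≤ 0 :=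
  (areaForm_nonpos_iff o hξ _ _).2 <|
    (mul_nonpos_of_nonneg_of_nonpos hξζ hωv).trans (mul_nonneg_of_nonpos_of_nonpos hωζ hξv)

end OrientedPlane

section Contributors

variable {E : Set Plane} {ε : ℝ} {x : Plane}

instance : Fact (Module.finrank ℝ Plane = 2) :=
  ⟨finrank_euclideanSpace_fin⟩

theorem eNbhd_mono {A B : Set Plane} (h : A ⊆ B) (ε : ℝ) : eNbhd A ε ⊆ eNbhd B ε :=
  closure_mono (biUnion_subset_biUnion_left h)

theorem eNbhd_eq_cthickening (E : Set Plane) (hε : 0 < ε) : eNbhd E ε = cthickening ε E := by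
  rw [eNbhd, ← thickening_eq_biUnion_ball, closure_thickening hε]

theorem pos_of_mem_frontier_eNbhd (hx : x ∈ frontier (eNbhd E ε)) : 0 < ε := by
  by_contra! hε
  simp [eNbhd, ball_eq_empty.2 hε] at hx

theorem le_dist_of_mem_frontier_eNbhd (hx : x ∈ frontier (eNbhd E ε)) {y : Plane}
    (hy : y ∈ closure E) : ε ≤ dist x y := by
  by_contra! hlt
  rw [eNbhd_eq_cthickening E (pos_of_mem_frontier_eNbhd hx)] at hx
  have hthick : x ∈ thickening ε E :=
    thickening_closure (s := E) ▸ mem_thickening_iff.2 ⟨y, hy, hlt⟩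
  exact hx.2 (thickening_subset_interior_cthickening ε E hthick)

theorem dist_eq_of_mem_contributors {y : Plane} (hy : y ∈ contributors E ε x) : dist x y = ε :=
  (dist_eq_norm' x y).trans hy.2

theorem contributors_eq (hx : x ∈ frontier (eNbhd E ε)) :
    contributors E ε x = closure E ∩ sphere x ε := by
  ext y
  simp only [contributors, mem_ofPred_eq, mem_inter_iff, mem_sphere, ← dist_eq_norm]
  refine and_congr_left fun hy => ⟨fun h => frontier_subset_closure h, fun h => ⟨h, fun hint => ?_⟩⟩
  have hyball : y ∈ closure (ball x ε) := by
    rw [closure_ball x (pos_of_mem_frontier_eNbhd hx).ne']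
    exact mem_closedBall.2 hy.le
  obtain ⟨w, hwE, hw⟩ := mem_closure_iff.1 hyball _ isOpen_interior hint
  exact (mem_ball'.1 hw).not_ge
    (le_dist_of_mem_frontier_eNbhd hx (subset_closure (interior_subset hwE)))

theorem isCompact_contributors (hx : x ∈ frontier (eNbhd E ε)) :
    IsCompact (contributors E ε x) := by
  rw [contributors_eq hx]
  exact (isCompact_sphere x ε).inter_left isClosed_closure

theorem contributors_nonempty (hx : x ∈ frontier (eNbhd E ε)) :
    (contributors E ε x).Nonempty := by
  have hε := pos_of_mem_frontier_eNbhd hx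
  have hxE : x ∈ eNbhd E ε := isClosed_closure.frontier_subset hx
  rw [eNbhd_eq_cthickening E hε, cthickening_eq_biUnion_closedBall E hε.le, mem_iUnion₂] at hxE
  obtain ⟨y, hy, hxy⟩ := hxE
  rw [contributors_eq hx]
  exact ⟨y, hy, mem_sphere'.2 <|
    (mem_closedBall.1 hxy).antisymm (le_dist_of_mem_frontier_eNbhd hx hy)⟩

theorem mem_outwardDirs_iff {ξ : Plane} :
    ξ ∈ outwardDirs E ε x ↔ ‖ξ‖ = 1 ∧ ∃ᶠ z in nhdsAlong x ξ, z ∉ eNbhd E ε := by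
  refine and_congr_right fun _ => ⟨?_, fun h => ?_⟩
  · rintro ⟨u, hu, hux, hudir⟩
    exact (tendsto_nhdsAlong_iff.2 ⟨hux, hudir⟩).frequently (.of_forall hu)
  · obtain ⟨u, hu, hunotMem⟩ := exists_seq_forall_of_frequently h
    exact ⟨u, hunotMem, tendsto_nhdsAlong_iff.1 hu⟩

theorem ne_zero_of_mem_outwardDirs {ξ : Plane} (hξ : ξ ∈ outwardDirs E ε x) : ξ ≠ 0 :=
  norm_ne_zero_iff.1 (hξ.1 ▸ one_ne_zero)

theorem inner_nonpos_of_mem_outwardDirs (hx : x ∈ frontier (eNbhd E ε)) {ξ w : Plane}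
    (hξ : ξ ∈ outwardDirs E ε x) (hw : w ∈ contributors E ε x) : ⟪w - x, ξ⟫ ≤ 0 := by
  by_contra! hpos
  rw [contributors_eq hx, mem_inter_iff, mem_sphere'] at hw
  refine (mem_outwardDirs_iff.1 hξ).2 ?_
  filter_upwards [eventually_mem_cthickening_nhdsAlong hw.1 hpos] with z hz
  rwa [not_not, eNbhd_eq_cthickening E (pos_of_mem_frontier_eNbhd hx), ← hw.2]

theorem eventually_notMem_eNbhd (hx : x ∈ frontier (eNbhd E ε)) {ξ : Plane}
    (h : ∀ w ∈ contributors E ε x, ⟪w - x, ξ⟫ < 0) : ∀ᶠ z in nhdsAlong x ξ, z ∉ eNbhd E ε := by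
  have hε := pos_of_mem_frontier_eNbhd hx
  rw [contributors_eq hx] at h
  rw [eNbhd_eq_cthickening E hε]
  exact eventually_notMem_cthickening_nhdsAlong hε.le
    (fun y hy => le_dist_of_mem_frontier_eNbhd hx hy) fun y hy hxy => h y ⟨hy, mem_sphere'.2 hxy⟩

theorem normalize_mem_outwardDirs (hx : x ∈ frontier (eNbhd E ε)) {η v : Plane} (hη : η ≠ 0)
    (h : ∀ w ∈ contributors E ε x, ⟪w - x, η⟫ ≤ 0)
    (hv : ∀ w ∈ contributors E ε x, ⟪w - x, v⟫ < 0) : normalize η ∈ outwardDirs E ε x := by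
  refine mem_outwardDirs_iff.2 ⟨NormedSpace.norm_normalize hη, fun hmem => ?_⟩
  have hperturb : Tendsto (fun s : ℝ => η + s • v) (𝓝[>] 0) (𝓝 η) :=
    (Continuous.tendsto' (by fun_prop) 0 η (by simp)).mono_left nhdsWithin_le_nhds
  have hdir : Tendsto (fun s : ℝ => normalize (η + s • v)) (𝓝[>] 0) (𝓝 (normalize η)) :=
    (hperturb.norm.inv₀ (norm_ne_zero_iff.2 hη)).smul hperturb
  obtain ⟨s, hs, hne, hspos⟩ := ((hdir.eventually (eventually_eventually_nhdsAlong hmem)).and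
    ((hperturb.eventually_ne hη).and self_mem_nhdsWithin)).exists
  have hstrict : ∀ w ∈ contributors E ε x, ⟪w - x, normalize (η + s • v)⟫ < 0 := fun w hw => by
    rw [NormedSpace.normalize, real_inner_smul_right, inner_add_right, real_inner_smul_right]
    exact mul_neg_of_pos_of_neg (by positivity)
      (add_neg_of_nonpos_of_neg (h w hw) (mul_neg_of_pos_of_neg hspos (hv w hw)))
  have := nhdsAlong_neBot x (NormedSpace.norm_normalize hne)
  obtain ⟨z, hz, hz'⟩ := (hs.and (eventually_notMem_eNbhd hx hstrict)).exists
  exact hz hz'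

theorem sub_ne_zero_of_mem_contributors (hx : x ∈ frontier (eNbhd E ε)) {y : Plane}
    (hy : y ∈ contributors E ε x) : y - x ≠ 0 :=
  norm_ne_zero_iff.1 (hy.2 ▸ (pos_of_mem_frontier_eNbhd hx).ne')

theorem normalize_rightAngleRotation_mem_extOutward (o : Orientation ℝ Plane (Fin 2))
    (hx : x ∈ frontier (eNbhd E ε)) {y v : Plane} (hy : y ∈ contributors E ε x)
    (h : ∀ w ∈ contributors E ε x, o.areaForm (y - x) (w - x) ≤ 0)
    (hv : ∀ w ∈ contributors E ε x, ⟪w - x, v⟫ < 0) :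
    normalize (o.rightAngleRotation (y - x)) ∈ extOutward E ε x := by
  refine ⟨normalize_mem_outwardDirs hx ?_ (fun w hw => ?_) hv, y, hy,
    inner_normalize_rightAngleRotation_self o _⟩
  · exact (o.rightAngleRotation.map_eq_zero_iff.not).2 (sub_ne_zero_of_mem_contributors hx hy)
  · rw [real_inner_comm, o.inner_rightAngleRotation_left]
    exact h w hw

theorem areaForm_nonneg_of_inner_extOutward_nonpos (o : Orientation ℝ Plane (Fin 2))
    (hx : x ∈ frontier (eNbhd E ε)) {ξ : Plane} (hξ : ∀ w ∈ contributors E ε x, ⟪w - x, ξ⟫ < 0)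
    (h : ∀ η ∈ extOutward E ε x, ⟪ξ, η⟫ ≤ 0) :
    ∀ w ∈ contributors E ε x, 0 ≤ o.areaForm ξ (w - x) := by
  intro w hw
  obtain ⟨y, hy, hyw⟩ := exists_forall_areaForm_nonpos o (isCompact_contributors hx)
    (contributors_nonempty hx) (by fun_prop) hξ
  have hξ0 : ξ ≠ 0 := by
    rintro rfl
    simpa using hξ w hw
  have hedge := h _ (normalize_rightAngleRotation_mem_extOutward o hx hy hyw hξ)
  have hξy : 0 ≤ o.areaForm ξ (y - x) := by
    rw [← neg_nonpos, ← o.inner_rightAngleRotation_right, inner_eq_norm_mul_inner_normalize]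
    exact mul_nonpos_of_nonneg_of_nonpos (norm_nonneg _) hedge
  have hle := ((areaForm_nonpos_iff o hξ0 _ _).1 (hyw w hw)).trans
    (mul_nonpos_of_nonneg_of_nonpos hξy (hξ w hw).le)
  exact nonneg_of_mul_nonpos_right hle (hξ y hy)

theorem exists_neg_mem_extOutward (hx : x ∈ frontier (eNbhd E ε)) {ξ : Plane}
    (hξ : ξ ∈ outwardDirs E ε x) (h : ∀ η ∈ extOutward E ε x, ⟪ξ, η⟫ ≤ 0) :
    ∃ η ∈ extOutward E ε x, -η ∈ extOutward E ε x := by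
  have hξnorm : ‖ξ‖ = 1 := hξ.1
  have hξext : ξ ∉ extOutward E ε x := fun hmem => by
    have hle := h ξ hmem
    norm_num [real_inner_self_eq_norm_sq, hξnorm] at hle
  have hneg : ∀ w ∈ contributors E ε x, ⟪w - x, ξ⟫ < 0 := fun w hw =>
    (inner_nonpos_of_mem_outwardDirs hx hξ hw).lt_of_ne fun hzero => hξext ⟨hξ, w, hw, hzero⟩
  let o : Orientation ℝ Plane (Fin 2) := (EuclideanSpace.basisFun (Fin 2) ℝ).toBasis.orientation
  have hperp : ∀ w ∈ contributors E ε x, ⟪w - x, o.rightAngleRotation ξ⟫ = 0 := fun w hw => by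
    rw [real_inner_comm, o.inner_rightAngleRotation_left]
    have hle := areaForm_nonneg_of_inner_extOutward_nonpos (-o) hx hneg h w hw
    rw [o.areaForm_neg_orientation, LinearMap.neg_apply, LinearMap.neg_apply, neg_nonneg] at hle
    exact hle.antisymm (areaForm_nonneg_of_inner_extOutward_nonpos o hx hneg h w hw)
  have hext : ∀ η : Plane, ‖η‖ = 1 → (∀ w ∈ contributors E ε x, ⟪w - x, η⟫ = 0) →
      η ∈ extOutward E ε x := fun η hη hηw => by
    obtain ⟨y, hy⟩ := contributors_nonempty hx
    have hmem := normalize_mem_outwardDirs hx (norm_ne_zero_iff.1 (hη ▸ one_ne_zero))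
      (fun w hw => (hηw w hw).le) hneg
    rw [NormedSpace.normalize_eq_self_of_norm_eq_one hη] at hmem
    exact ⟨hmem, y, hy, hηw y hy⟩
  refine ⟨o.rightAngleRotation ξ, hext _ (by simpa using hξnorm) hperp,
    hext _ (by simpa using hξnorm) fun w hw => ?_⟩
  rw [inner_neg_right, hperp w hw, neg_zero]

theorem exists_orientation_areaForm_neg_and_pos (hx : x ∈ frontier (eNbhd E ε)) {ξ ζ y : Plane}
    (hξ : ξ ∈ extOutward E ε x) (hζ : ζ ≠ 0) (hζξ : 0 ≤ ⟪ζ, ξ⟫)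
    (h : ∀ w ∈ extContrib E ε x, ⟪w - x, ζ⟫ ≤ 0) (hyξ : ⟪y - x, ξ⟫ < 0)
    (hyζ : 0 ≤ ⟪y - x, ζ⟫) :
    ∃ o : Orientation ℝ Plane (Fin 2), o.areaForm ξ ζ < 0 ∧
      ∀ w ∈ contributors E ε x, ⟪w - x, ξ⟫ = 0 → 0 < o.areaForm ξ (w - x) := by
  obtain ⟨hξout, p, hp, hpξ⟩ := hξ
  have hξ0 := ne_zero_of_mem_outwardDirs hξout
  obtain ⟨o, ho⟩ := exists_orientation_areaForm_pos hξ0 (sub_ne_zero_of_mem_contributors hx hp) hpξ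
  have hperp : ∀ w ∈ contributors E ε x, ⟪w - x, ξ⟫ = 0 →
      o.areaForm ξ (w - x) * o.areaForm ξ ζ ≤ 0 := fun w hw hwξ => by
    have hle := h w ⟨hw, ξ, hξout, hwξ⟩
    rwa [inner_eq_mul_add_areaForm_mul o hξout.1, hwξ, zero_mul, zero_add] at hle
  have hξζ : o.areaForm ξ ζ ≠ 0 := fun hzero => by
    have hsq : 0 < ⟪ζ, ζ⟫ := real_inner_self_pos.2 hζ
    rw [inner_eq_mul_add_areaForm_mul o hξout.1, hzero, mul_zero, add_zero] at hsq hyζ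
    exact (mul_neg_of_neg_of_pos hyξ (hζξ.lt_of_ne (left_ne_zero_of_mul hsq.ne').symm)).not_ge hyζ
  have hneg : o.areaForm ξ ζ < 0 := (nonpos_of_mul_nonpos_right (hperp p hp hpξ) ho).lt_of_ne hξζ
  refine ⟨o, hneg, fun w hw hwξ => ?_⟩
  refine (nonneg_of_mul_nonpos_left (hperp w hw hwξ) hneg).lt_of_ne' fun hzero => ?_
  have hself := inner_eq_mul_add_areaForm_mul o hξout.1 (w - x) (w - x)
  rw [hwξ, hzero, zero_mul, add_zero, inner_self_eq_zero] at hself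
  exact sub_ne_zero_of_mem_contributors hx hw hself

theorem mem_extContrib_of_areaForm_neg (o : Orientation ℝ Plane (Fin 2))
    (hx : x ∈ frontier (eNbhd E ε)) {ξ ζ y : Plane} (hξ : ξ ∈ outwardDirs E ε x) (hζ : ζ ≠ 0)
    (hζξ : 0 ≤ ⟪ζ, ξ⟫) (hξζ : o.areaForm ξ ζ < 0)
    (hboundary : ∀ w ∈ contributors E ε x, ⟪w - x, ξ⟫ = 0 → 0 < o.areaForm ξ (w - x))
    (h : ∀ w ∈ extContrib E ε x, ⟪w - x, ζ⟫ ≤ 0) (hy : y ∈ contributors E ε x)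
    (hyζ : 0 ≤ ⟪y - x, ζ⟫) : y ∈ extContrib E ε x := by
  have hξ0 := ne_zero_of_mem_outwardDirs hξ
  have hnonpos : ∀ w ∈ contributors E ε x, ⟪w - x, ξ⟫ ≤ 0 := fun w hw =>
    inner_nonpos_of_mem_outwardDirs hx hξ hw
  have hξy : o.areaForm ξ (y - x) ≤ 0 := by
    rw [inner_eq_mul_add_areaForm_mul o hξ.1] at hyζ
    have hle := mul_nonpos_of_nonpos_of_nonneg (hnonpos y hy) hζξ
    exact nonpos_of_mul_nonneg_left (by linarith) hξζ
  obtain ⟨c, hc, hξc, hcmax, hcneg⟩ := exists_forall_areaForm_nonpos_of_inner_nonpos o hξ0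
    (isCompact_contributors hx) (f := fun w => w - x) (by fun_prop) hnonpos hboundary ⟨y, hy, hξy⟩
  obtain ⟨hηout, -⟩ := normalize_rightAngleRotation_mem_extOutward o hx hc hcmax hcneg
  have hcζ : ⟪c - x, ζ⟫ ≤ 0 := h c ⟨hc, _, hηout, inner_normalize_rightAngleRotation_self o _⟩
  have hζy := areaForm_nonpos_of_quadrant o hξ0 hζξ hξζ.le (hnonpos y hy) hξy
  have hζc := areaForm_nonpos_of_quadrant o hξ0 hζξ hξζ.le (hnonpos c hc) hξc
  have hyc : o.areaForm (y - x) (c - x) ≤ 0 := (areaForm_nonpos_iff o hζ _ _).2 <|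
    (mul_nonpos_of_nonneg_of_nonpos hyζ hζc).trans (mul_nonneg_of_nonpos_of_nonpos hζy hcζ)
  have hcy : o.areaForm (c - x) (y - x) = 0 := by
    rw [o.areaForm_swap, neg_nonpos] at hyc
    exact (hcmax y hy).antisymm hyc
  refine ⟨hy, _, hηout, ?_⟩
  rw [NormedSpace.normalize, real_inner_smul_right, real_inner_comm,
    o.inner_rightAngleRotation_left, hcy, mul_zero]

theorem inner_neg_of_notMem_extContrib (hx : x ∈ frontier (eNbhd E ε)) {ξ ζ y : Plane}
    (hξ : ξ ∈ extOutward E ε x) (hζ : ζ ≠ 0) (hζξ : 0 ≤ ⟪ζ, ξ⟫)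
    (h : ∀ w ∈ extContrib E ε x, ⟪w - x, ζ⟫ ≤ 0) (hy : y ∈ contributors E ε x)
    (hyext : y ∉ extContrib E ε x) : ⟪y - x, ζ⟫ < 0 := by
  by_contra! hyζ
  have hyξ : ⟪y - x, ξ⟫ < 0 := (inner_nonpos_of_mem_outwardDirs hx hξ.1 hy).lt_of_ne fun hzero =>
    hyext ⟨hy, ξ, hξ.1, hzero⟩
  obtain ⟨o, hξζ, hboundary⟩ := exists_orientation_areaForm_neg_and_pos hx hξ hζ hζξ h hyξ hyζ
  exact hyext (mem_extContrib_of_areaForm_neg o hx hξ.1 hζ hζξ hξζ hboundary h hy hyζ)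

theorem eventually_mem_eNbhd_of_inner_extOutward_neg (hx : x ∈ frontier (eNbhd E ε)) :
    ∀ᶠ z in 𝓝 x, (∀ η ∈ extOutward E ε x, ⟪z - x, η⟫ < 0) → z ∈ eNbhd E ε := by
  refine eventually_nhds_of_forall_nhdsAlong
    (fun _ => isClosed_closure.frontier_subset hx) fun ζ hζ => ?_
  by_contra hfreq
  have hζout : ζ ∈ outwardDirs E ε x := mem_outwardDirs_iff.2
    ⟨hζ, (not_eventually.1 hfreq).mono fun z hz => (Classical.not_imp.1 hz).2⟩
  have hnonpos : ∀ η ∈ extOutward E ε x, ⟪ζ, η⟫ ≤ 0 := fun η hη => by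
    by_contra! hpos
    rw [real_inner_comm] at hpos
    refine hfreq ?_
    filter_upwards [eventually_inner_pos_nhdsAlong hpos] with z hz hlt
    rw [real_inner_comm] at hz
    exact absurd (hlt η hη) hz.not_gt
  obtain ⟨η, hη, hη'⟩ := exists_neg_mem_extOutward hx hζout hnonpos
  refine hfreq (.of_forall fun z hlt => ?_)
  have hneg := hlt _ hη'
  rw [inner_neg_right, neg_lt_zero] at hneg
  exact absurd (hlt η hη) hneg.not_gt

theorem mem_closure_inter_thickening {δ : ℝ} (hδ : 0 < δ) {w : Plane}
    (hw : w ∈ extContrib E ε x) : w ∈ closure (E ∩ thickening δ (extContrib E ε x)) := by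
  rw [inter_comm]
  exact isOpen_thickening.inter_closure
    ⟨self_subset_thickening hδ _ hw, frontier_subset_closure hw.1.1⟩

theorem eventually_notMem_eNbhd_sdiff_thickening (hx : x ∈ frontier (eNbhd E ε)) {ζ : Plane}
    {δ : ℝ} (hδ : 0 < δ)
    (h : ∀ y ∈ contributors E ε x, y ∉ extContrib E ε x → ⟪y - x, ζ⟫ < 0) :
    ∀ᶠ z in nhdsAlong x ζ, z ∉ eNbhd (E \ thickening δ (extContrib E ε x)) ε := by
  have hε := pos_of_mem_frontier_eNbhd hx
  have hfar : closure (E \ thickening δ (extContrib E ε x)) ⊆ (extContrib E ε x)ᶜ :=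
    (closure_minimal (sdiff_subset_compl _ _) isOpen_thickening.isClosed_compl).trans <|
      compl_subset_compl.2 (self_subset_thickening hδ _)
  rw [eNbhd_eq_cthickening _ hε]
  refine eventually_notMem_cthickening_nhdsAlong hε.le
    (fun y hy => le_dist_of_mem_frontier_eNbhd hx (closure_mono sdiff_subset hy))
    fun y hy hxy => h y ?_ (hfar hy)
  rw [contributors_eq hx]
  exact ⟨closure_mono sdiff_subset hy, mem_sphere'.2 hxy⟩

theorem mem_eNbhd_inter_thickening_self (hx : x ∈ frontier (eNbhd E ε)) {δ : ℝ} (hδ : 0 < δ)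
    (hne : (extContrib E ε x).Nonempty) :
    x ∈ eNbhd (E ∩ thickening δ (extContrib E ε x)) ε := by
  obtain ⟨w, hw⟩ := hne
  rw [eNbhd_eq_cthickening _ (pos_of_mem_frontier_eNbhd hx), ← cthickening_closure]
  exact mem_cthickening_of_dist_le x w _ _ (mem_closure_inter_thickening hδ hw)
    (dist_eq_of_mem_contributors hw.1).le

theorem eventually_mem_eNbhd_inter_thickening (hx : x ∈ frontier (eNbhd E ε)) {ξ : Plane}
    (hξ : ξ ∈ extOutward E ε x) {δ : ℝ} (hδ : 0 < δ) :
    ∀ᶠ z in 𝓝 x, 0 ≤ ⟪z - x, ξ⟫ → z ∈ eNbhd E ε →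
      z ∈ eNbhd (E ∩ thickening δ (extContrib E ε x)) ε := by
  have hε := pos_of_mem_frontier_eNbhd hx
  obtain ⟨hξout, p, hp, hpξ⟩ := hξ
  refine eventually_nhds_of_forall_nhdsAlong (fun _ _ =>
    mem_eNbhd_inter_thickening_self hx hδ ⟨p, hp, ξ, hξout, hpξ⟩) fun ζ hζ => ?_
  rcases lt_or_ge ⟪ζ, ξ⟫ 0 with hζξ | hζξ
  · have hpos : 0 < ⟪-ξ, ζ⟫ := by rwa [inner_neg_left, real_inner_comm, neg_pos]
    filter_upwards [eventually_inner_pos_nhdsAlong hpos] with z hz hzξ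
    rw [inner_neg_left, real_inner_comm, neg_pos] at hz
    exact absurd hzξ hz.not_ge
  by_cases h : ∃ w ∈ extContrib E ε x, 0 < ⟪w - x, ζ⟫
  · obtain ⟨w, hw, hwζ⟩ := h
    filter_upwards [eventually_mem_cthickening_nhdsAlong (mem_closure_inter_thickening hδ hw) hwζ]
      with z hz _ _
    rwa [dist_eq_of_mem_contributors hw.1, ← eNbhd_eq_cthickening _ hε] at hz
  · push Not at h
    have hζ0 : ζ ≠ 0 := norm_ne_zero_iff.1 (hζ ▸ one_ne_zero)
    filter_upwards [eventually_notMem_eNbhd_sdiff_thickening hx hδ fun y hy hyext =>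
      inner_neg_of_notMem_extContrib hx ⟨hξout, p, hp, hpξ⟩ hζ0 hζξ h hy hyext] with z hz _ hzE
    rw [← inter_union_sdiff E (thickening δ (extContrib E ε x)), eNbhd, biUnion_union,
      closure_union] at hzE
    exact hzE.resolve_right hz

theorem mem_closure_halfBall_iff {v z : Plane} {r : ℝ} (hv : v ≠ 0) (hz : z ∈ ball x r) :
    z ∈ closure (halfBall x v r) ↔ 0 ≤ ⟪z - x, v⟫ := by
  refine ⟨fun h => ?_, fun h => ?_⟩
  · exact closure_minimal (fun w hw => hw.2.le)
      (isClosed_le continuous_const (by fun_prop : Continuous fun w => ⟪w - x, v⟫)) h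
  · have hray : Tendsto (fun t : ℝ => z + t • v) (𝓝[>] 0) (𝓝 z) :=
      (Continuous.tendsto' (by fun_prop) 0 z (by simp)).mono_left nhdsWithin_le_nhds
    refine mem_closure_of_tendsto hray ?_
    filter_upwards [hray.eventually (isOpen_ball.mem_nhds hz), self_mem_nhdsWithin] with t htz ht
    refine ⟨htz, ?_⟩
    rw [add_sub_right_comm, inner_add_left, real_inner_smul_left]
    exact add_pos_of_nonneg_of_pos h (mul_pos ht (real_inner_self_pos.2 hv))

end Contributors

theorem local_contribution_general {E : Set Plane} {ε : ℝ} {x : Plane}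
    (hx : x ∈ frontier (eNbhd E ε)) {ξ₁ ξ₂ : Plane} (hext : extOutward E ε x = {ξ₁, ξ₂}) :
    ∀ δ > 0, ∃ r > 0, ∀ z ∈ ball x r,
      (z ∈ eNbhd E ε ↔
        (z ∉ closure (halfBall x ξ₁ r) ∪ closure (halfBall x ξ₂ r)) ∨
        z ∈ closure (⋃ y ∈ {y ∈ E | ∃ w ∈ extContrib E ε x, dist y w < δ}, ball y ε)) := by
  intro δ hδ
  have hξ₁ : ξ₁ ∈ extOutward E ε x := hext ▸ mem_insert ξ₁ {ξ₂}
  have hξ₂ : ξ₂ ∈ extOutward E ε x := hext ▸ mem_insert_of_mem ξ₁ rfl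
  have hnear : {y ∈ E | ∃ w ∈ extContrib E ε x, dist y w < δ} =
      E ∩ thickening δ (extContrib E ε x) := by
    ext y
    simp only [mem_ofPred_eq, mem_inter_iff, mem_thickening_iff]
  obtain ⟨r, hr, hball⟩ := eventually_nhds_iff_ball.1 <|
    (eventually_mem_eNbhd_of_inner_extOutward_neg hx).and <|
    (eventually_mem_eNbhd_inter_thickening hx hξ₁ hδ).and
    (eventually_mem_eNbhd_inter_thickening hx hξ₂ hδ)
  refine ⟨r, hr, fun z hz => ?_⟩
  obtain ⟨houtside, hnear₁, hnear₂⟩ := hball z hz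
  simp only [hext, mem_insert_iff, mem_singleton_iff, forall_eq_or_imp, forall_eq] at houtside
  rw [mem_union, mem_closure_halfBall_iff (ne_zero_of_mem_outwardDirs hξ₁.1) hz,
    mem_closure_halfBall_iff (ne_zero_of_mem_outwardDirs hξ₂.1) hz, hnear]
  refine ⟨fun hzE => or_iff_not_imp_left.2 fun h => ?_, ?_⟩
  · exact (not_not.1 h).elim (hnear₁ · hzE) (hnear₂ · hzE)
  · rintro (h | h)
    · exact houtside (by simpa only [not_or, not_le] using h)
    · exact eNbhd_mono inter_subset_left ε h

/-- Local contribution: near `x`, membership of `E_ε` is decided either by lying outside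
both closed half-balls in the extremal outward directions, or by lying in the closed
ε-neighbourhood of the part of `E` within distance `δ` of the extremal contributors. -/
theorem local_contribution (E : Set Plane) (hE : IsCompact E) {ε : ℝ} (hε : 0 < ε)
    (x : Plane) (hx : x ∈ frontier (eNbhd E ε)) (ξ₁ ξ₂ : Plane)
    (hext : extOutward E ε x = {ξ₁, ξ₂}) :
    ∀ δ > 0, ∃ r > 0, ∀ z ∈ ball x r,
      (z ∈ eNbhd E ε ↔
        (z ∉ closure (halfBall x ξ₁ r) ∪ closure (halfBall x ξ₂ r)) ∨
        z ∈ closure (⋃ y ∈ {y ∈ E | ∃ w ∈ extContrib E ε x, dist y w < δ}, ball y ε)) :=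
  local_contribution_general hx hext

end
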